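/- arXiv:2310.20007 — 2 statements merged into one kernel-verified Lean document; each statement's English description precedes it below -/
import Mathlib

section
/- Let Θ be a set of time-inhomogeneous tabular environments on common state space S, action space A and horizon H with fixed initial state s₁ and a choice E ↦ π*_E of optimal policies. For each h let L_h^P(δ) and L_h^R(δ) denote the minimal cardinalities of δ-covers of the families {P_h^{E} : E ∈ Θ} and {r_h^{E} : E ∈ Θ} in the metrics l1(P,P') = max_{(s,a)} Σ_{s'} |P(s'|s,a) − P'(s'|s,a)| and max_{(s,a)}|r(s,a) − r'(s,a)| respectively, and assume these are finite for every δ > 0. Let K_surr(ε) be the minimal number of classes of a layered ε-value partition of Θ. Define the dimensions d_{l1,h}^P = limsup_{δ→0⁺} log L_h^P(δ) / log(1/δ), d_{l1,h}^R = limsup_{δ→0⁺} log L_h^R(δ) / log(1/δ), d_{l1} = Σ_{h=1}^{H} ( d_{l1,h}^P + d_{l1,h}^R ), and d_surr = limsup_{ε→0⁺} log K_surr(ε) / log(1/ε). Then d_surr ≤ d_{l1}. -/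
open Finset Filter

/-- A tabular environment: a pair of (time-indexed) transition kernels and rewards. -/
abbrev Env (S A : Type*) := (ℕ → S → A → S → ℝ) × (ℕ → S → A → ℝ)

variable {S A : Type*}

/-- Value function: `val H P r pol k s` is the value at the layer with `k` steps
remaining (i.e. at layer `H + 1 - k`); thus `val H P r pol H s₁` is `V_{1,π}(s₁)`. -/
noncomputable def val [Fintype S] [Fintype A] (H : ℕ) (P : ℕ → S → A → S → ℝ)
    (r : ℕ → S → A → ℝ) (pol : ℕ → S → A → ℝ) : ℕ → S → ℝ
  | 0 => fun _ => 0
  | (k + 1) => fun s => ∑ a, pol (H - k) s a *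
      (r (H - k) s a + ∑ s', P (H - k) s a s' * val H P r pol k s')

/-- Each `P h (· | s,a)`, `h = 1,…,H`, is a probability distribution on `S`. -/
def IsKernel [Fintype S] [Fintype A] (H : ℕ) (P : ℕ → S → A → S → ℝ) : Prop :=
  ∀ h ∈ Finset.Icc 1 H, ∀ s a, (∀ s', 0 ≤ P h s a s') ∧ ∑ s', P h s a s' = 1

/-- Each mean reward `r h s a`, `h = 1,…,H`, lies in `[0,1]`. -/
def IsReward (H : ℕ) (r : ℕ → S → A → ℝ) : Prop :=
  ∀ h ∈ Finset.Icc 1 H, ∀ (s : S) (a : A), 0 ≤ r h s a ∧ r h s a ≤ 1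

/-- Each `pol h (· | s)`, `h = 1,…,H`, is a probability distribution on `A`. -/
def IsPolicy [Fintype A] (H : ℕ) (pol : ℕ → S → A → ℝ) : Prop :=
  ∀ h ∈ Finset.Icc 1 H, ∀ s : S, (∀ a, 0 ≤ pol h s a) ∧ ∑ a, pol h s a = 1

/-- A layered ε-value partition of `Θ` into `K` classes: a genuine partition whose
classes have layerwise product form, and on each class the value of `π*_E` changes by
at most `ε` when the environment is replaced by another member of the class. -/
def IsLayeredValuePartition [Fintype S] [Fintype A]
    (H : ℕ) (s₁ : S) (Θ : Set (Env S A)) (πstar : Env S A → (ℕ → S → A → ℝ))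
    (ε : ℝ) (K : ℕ) (T : Fin K → Set (Env S A)) : Prop :=
  (∀ E ∈ Θ, ∃! k, E ∈ T k) ∧
  (∀ k, ∃ (As : ℕ → Set (S → A → S → ℝ)) (Bs : ℕ → Set (S → A → ℝ)),
    T k = {E ∈ Θ | ∀ h ∈ Finset.Icc 1 H, E.1 h ∈ As h ∧ E.2 h ∈ Bs h}) ∧
  (∀ k, ∀ E ∈ T k, ∀ E' ∈ T k,
    val H E.1 E.2 (πstar E) H s₁ - val H E'.1 E'.2 (πstar E) H s₁ ≤ ε)

lemma val_bounds [Fintype S] [Fintype A] (H : ℕ) (P : ℕ → S → A → S → ℝ)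
    (r : ℕ → S → A → ℝ) (pol : ℕ → S → A → ℝ) (hP : IsKernel H P) (hr : IsReward H r)
    (hpol : IsPolicy H pol) : ∀ k : ℕ, k ≤ H → ∀ s : S,
      0 ≤ val H P r pol k s ∧ val H P r pol k s ≤ k := by
  intro k
  induction k with
  | zero => intro _ s; simp [_root_.val]
  | succ k ih =>
    intro hk s
    have ih' := ih (by omega)
    have hm : H - k ∈ Finset.Icc 1 H := by simp; omega
    have h1 := hpol _ hm s
    have hin : ∀ a, 0 ≤ r (H - k) s a + ∑ s', P (H - k) s a s' * val H P r pol k s' ∧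
        r (H - k) s a + ∑ s', P (H - k) s a s' * val H P r pol k s' ≤ (k : ℝ) + 1 := by
      intro a
      have hPa := hP _ hm s a
      have hra := hr _ hm s a
      have h2 : 0 ≤ ∑ s', P (H - k) s a s' * val H P r pol k s' :=
        Finset.sum_nonneg fun s' _ => mul_nonneg (hPa.1 s') (ih' s').1
      have h3 : ∑ s', P (H - k) s a s' * val H P r pol k s' ≤ ∑ s', P (H - k) s a s' * (k : ℝ) :=
        Finset.sum_le_sum fun s' _ => mul_le_mul_of_nonneg_left (ih' s').2 (hPa.1 s')
      rw [← Finset.sum_mul, hPa.2] at h3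
      constructor <;> linarith
    simp only [_root_.val]
    constructor
    · exact Finset.sum_nonneg fun a _ => mul_nonneg (h1.1 a) (hin a).1
    · have h4 : ∑ a, pol (H - k) s a *
          (r (H - k) s a + ∑ s', P (H - k) s a s' * val H P r pol k s') ≤
          ∑ a, pol (H - k) s a * ((k : ℝ) + 1) :=
        Finset.sum_le_sum fun a _ => mul_le_mul_of_nonneg_left (hin a).2 (h1.1 a)
      rw [← Finset.sum_mul, h1.2] at h4
      push_cast
      linarith

lemma val_diff [Fintype S] [Fintype A] (H : ℕ) (P P' : ℕ → S → A → S → ℝ)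
    (r r' : ℕ → S → A → ℝ) (pol : ℕ → S → A → ℝ) (hP : IsKernel H P) (hr : IsReward H r)
    (hP' : IsKernel H P') (hpol : IsPolicy H pol) (η : ℝ) (hη : 0 ≤ η)
    (hdP : ∀ h ∈ Finset.Icc 1 H, ∀ s a, ∑ s', |P h s a s' - P' h s a s'| ≤ η)
    (hdr : ∀ h ∈ Finset.Icc 1 H, ∀ s a, |r h s a - r' h s a| ≤ η) :
    ∀ k : ℕ, k ≤ H → ∀ s : S,
      |val H P r pol k s - val H P' r' pol k s| ≤ k * ((1 + H) * η) := by
  intro k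
  induction k with
  | zero => intro _ s; simp [_root_.val]
  | succ k ih =>
    intro hk s
    have ih' := ih (by omega)
    have hm : H - k ∈ Finset.Icc 1 H := by simp; omega
    have h1 := hpol _ hm s
    have hb := val_bounds H P r pol hP hr hpol k (by omega)
    have hkH : (k : ℝ) ≤ H := by exact_mod_cast (by omega : k ≤ H)
    have hin : ∀ a, |(r (H - k) s a + ∑ s', P (H - k) s a s' * val H P r pol k s') -
        (r' (H - k) s a + ∑ s', P' (H - k) s a s' * val H P' r' pol k s')|
        ≤ ((k : ℝ) + 1) * ((1 + H) * η) := by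
      intro a
      have hPa := hP' _ hm s a
      have e : (r (H - k) s a + ∑ s', P (H - k) s a s' * val H P r pol k s') -
        (r' (H - k) s a + ∑ s', P' (H - k) s a s' * val H P' r' pol k s')
        = (r (H - k) s a - r' (H - k) s a) +
          (∑ s', (P (H - k) s a s' - P' (H - k) s a s') * val H P r pol k s'
          + ∑ s', P' (H - k) s a s' * (val H P r pol k s' - val H P' r' pol k s')) := by
        rw [← Finset.sum_add_distrib, add_sub_add_comm, ← Finset.sum_sub_distrib]
        congr 1
        exact Finset.sum_congr rfl fun _ _ => by ring
      rw [e]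
      have a1 : |∑ s', (P (H - k) s a s' - P' (H - k) s a s') * val H P r pol k s'| ≤ η * H := by
        refine (Finset.abs_sum_le_sum_abs _ _).trans ?_
        refine le_trans ?_ (mul_le_mul_of_nonneg_right (hdP _ hm s a) (Nat.cast_nonneg H))
        rw [Finset.sum_mul]
        refine Finset.sum_le_sum fun s' _ => ?_
        rw [abs_mul]
        refine mul_le_mul_of_nonneg_left ?_ (abs_nonneg _)
        rw [abs_of_nonneg (hb s').1]
        exact (hb s').2.trans hkH
      have a2 : |∑ s', P' (H - k) s a s' * (val H P r pol k s' - val H P' r' pol k s')|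
          ≤ k * ((1 + H) * η) := by
        refine (Finset.abs_sum_le_sum_abs _ _).trans ?_
        have : ∑ s', P' (H - k) s a s' * (k * ((1 + H) * η)) = k * ((1 + H) * η) := by
          rw [← Finset.sum_mul, hPa.2, one_mul]
        rw [← this]
        refine Finset.sum_le_sum fun s' _ => ?_
        rw [abs_mul, abs_of_nonneg (hPa.1 s')]
        exact mul_le_mul_of_nonneg_left (ih' s') (hPa.1 s')
      have a3 := hdr _ hm s a
      refine (abs_add_le _ _).trans ?_
      have := abs_add_le (∑ s', (P (H - k) s a s' - P' (H - k) s a s') * val H P r pol k s')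
        (∑ s', P' (H - k) s a s' * (val H P r pol k s' - val H P' r' pol k s'))
      nlinarith
    simp only [_root_.val]
    rw [← Finset.sum_sub_distrib]
    refine (Finset.abs_sum_le_sum_abs _ _).trans ?_
    have : ∑ a, pol (H - k) s a * (((k + 1 : ℕ) : ℝ) * ((1 + H) * η)) =
        ((k + 1 : ℕ) : ℝ) * ((1 + H) * η) := by
      rw [← Finset.sum_mul, h1.2, one_mul]
    rw [← this]
    refine Finset.sum_le_sum fun a _ => ?_
    rw [← mul_sub, abs_mul, abs_of_nonneg (h1.1 a)]
    refine mul_le_mul_of_nonneg_left ?_ (h1.1 a)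
    push_cast
    exact hin a

/-- Partition from covers. -/
lemma exists_partition [Fintype S] [Fintype A]
    (H : ℕ) (s₁ : S) (Θ : Set (Env S A))
    (hΘ : ∀ E ∈ Θ, IsKernel H E.1 ∧ IsReward H E.2)
    (πstar : Env S A → (ℕ → S → A → ℝ))
    (hπstar : ∀ E ∈ Θ, IsPolicy H (πstar E))
    (ε δ : ℝ) (hδ : 0 ≤ δ) (hε : (H : ℝ) * ((1 + H) * (2 * δ)) ≤ ε)
    (C : ℕ → Finset (S → A → S → ℝ)) (D : ℕ → Finset (S → A → ℝ))
    (hC : ∀ h ∈ Finset.Icc 1 H, ∀ E ∈ Θ, ∃ Q ∈ C h, ∀ s a,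
      ∑ s', |E.1 h s a s' - Q s a s'| ≤ δ)
    (hD : ∀ h ∈ Finset.Icc 1 H, ∀ E ∈ Θ, ∃ Q ∈ D h, ∀ s a, |E.2 h s a - Q s a| ≤ δ) :
    ∃ T : Fin (∏ h ∈ Finset.Icc 1 H, ((C h).card * (D h).card)) → Set (Env S A),
      IsLayeredValuePartition H s₁ Θ πstar ε _ T := by
  classical
  have hφ : ∀ (h : ℕ) (P : S → A → S → ℝ), ∃ Q, (∃ Q' ∈ C h, ∀ s a,
      ∑ s', |P s a s' - Q' s a s'| ≤ δ) → (Q ∈ C h ∧ ∀ s a, ∑ s', |P s a s' - Q s a s'| ≤ δ) := by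
    intro h P
    by_cases hx : ∃ Q' ∈ C h, ∀ s a, ∑ s', |P s a s' - Q' s a s'| ≤ δ
    · obtain ⟨Q, h1, h2⟩ := hx
      exact ⟨Q, fun _ => ⟨h1, h2⟩⟩
    · exact ⟨P, fun h => absurd h hx⟩
  have hψ : ∀ (h : ℕ) (P : S → A → ℝ), ∃ Q, (∃ Q' ∈ D h, ∀ s a,
      |P s a - Q' s a| ≤ δ) → (Q ∈ D h ∧ ∀ s a, |P s a - Q s a| ≤ δ) := by
    intro h P
    by_cases hx : ∃ Q' ∈ D h, ∀ s a, |P s a - Q' s a| ≤ δ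
    · obtain ⟨Q, h1, h2⟩ := hx
      exact ⟨Q, fun _ => ⟨h1, h2⟩⟩
    · exact ⟨P, fun h => absurd h hx⟩
  choose φ hφ using hφ
  choose ψ hψ using hψ
  have hcard : Fintype.card (∀ h : Finset.Icc 1 H, (C h.1) × (D h.1)) =
      ∏ h ∈ Finset.Icc 1 H, ((C h).card * (D h).card) := by
    rw [Fintype.card_pi, ← Finset.prod_coe_sort (Finset.Icc 1 H)
      (fun h => (C h).card * (D h).card)]
    refine Finset.prod_congr rfl fun h _ => ?_
    rw [Fintype.card_prod, Fintype.card_coe, Fintype.card_coe]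
  let e := Fintype.equivFinOfCardEq hcard
  refine ⟨fun k => {E ∈ Θ | ∀ h (hh : h ∈ Finset.Icc 1 H),
    φ h (E.1 h) = ((e.symm k ⟨h, hh⟩).1 : S → A → S → ℝ) ∧
    ψ h (E.2 h) = ((e.symm k ⟨h, hh⟩).2 : S → A → ℝ)}, ?_, ?_, ?_⟩
  · intro E hE
    refine ⟨e fun h => (⟨φ h.1 (E.1 h.1), (hφ _ _ (hC h.1 h.2 E hE)).1⟩,
      ⟨ψ h.1 (E.2 h.1), (hψ _ _ (hD h.1 h.2 E hE)).1⟩), ⟨hE, ?_⟩, ?_⟩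
    · intro h hh
      simp
    · rintro k ⟨_, hk⟩
      rw [← e.symm_apply_eq]
      funext h
      exact Prod.ext (Subtype.ext (hk h.1 h.2).1.symm) (Subtype.ext (hk h.1 h.2).2.symm)
  · intro k
    refine ⟨fun h => {P | ∀ hh : h ∈ Finset.Icc 1 H,
        φ h P = ((e.symm k ⟨h, hh⟩).1 : S → A → S → ℝ)},
      fun h => {P | ∀ hh : h ∈ Finset.Icc 1 H,
        ψ h P = ((e.symm k ⟨h, hh⟩).2 : S → A → ℝ)}, ?_⟩
    ext E
    constructor
    · rintro ⟨h1, h2⟩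
      exact ⟨h1, fun h hh => ⟨fun _ => (h2 h hh).1, fun _ => (h2 h hh).2⟩⟩
    · rintro ⟨h1, h2⟩
      exact ⟨h1, fun h hh => ⟨(h2 h hh).1 hh, (h2 h hh).2 hh⟩⟩
  · rintro k E ⟨hE, hk⟩ E' ⟨hE', hk'⟩
    refine le_trans (le_trans (le_abs_self _) (val_diff H E.1 E'.1 E.2 E'.2 (πstar E) (hΘ E hE).1
      (hΘ E hE).2 (hΘ E' hE').1 (hπstar E hE) (2 * δ) (by linarith) ?_ ?_ H le_rfl s₁)) hε
    · intro h hh s a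
      have h1 := (hφ _ _ (hC h hh E hE)).2 s a
      have h2 := (hφ _ _ (hC h hh E' hE')).2 s a
      rw [(hk h hh).1] at h1
      rw [(hk' h hh).1] at h2
      have : ∀ s', |E.1 h s a s' - E'.1 h s a s'| ≤
          |E.1 h s a s' - ((e.symm k ⟨h, hh⟩).1 : S → A → S → ℝ) s a s'| +
          |E'.1 h s a s' - ((e.symm k ⟨h, hh⟩).1 : S → A → S → ℝ) s a s'| := by
        intro s'
        rw [abs_sub_comm (E'.1 h s a s')]
        exact abs_sub_le _ _ _
      refine (Finset.sum_le_sum fun s' _ => this s').trans ?_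
      rw [Finset.sum_add_distrib]
      linarith
    · intro h hh s a
      have h1 := (hψ _ _ (hD h hh E hE)).2 s a
      have h2 := (hψ _ _ (hD h hh E' hE')).2 s a
      rw [(hk h hh).2] at h1
      rw [(hk' h hh).2, abs_sub_comm] at h2
      have := abs_sub_le (E.2 h s a) (((e.symm k ⟨h, hh⟩).2 : S → A → ℝ) s a) (E'.2 h s a)
      linarith

lemma log_ratio_tendsto (c : ℝ) (hc : 0 < c) :
    Tendsto (fun ε : ℝ => Real.log (1 / (c * ε)) / Real.log (1 / ε)) (nhdsWithin 0 (Set.Ioi 0))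
      (nhds 1) := by
  have h0 : Tendsto (fun ε : ℝ => Real.log (1 / ε)) (nhdsWithin 0 (Set.Ioi 0)) atTop := by
    simp only [one_div]
    exact Real.tendsto_log_atTop.comp tendsto_inv_nhdsGT_zero
  have h1 : Tendsto (fun ε : ℝ => 1 + (-Real.log c) / Real.log (1 / ε))
      (nhdsWithin 0 (Set.Ioi 0)) (nhds (1 + 0)) :=
    tendsto_const_nhds.add (h0.const_div_atTop _)
  rw [add_zero] at h1
  refine h1.congr' ?_
  filter_upwards [h0.eventually_gt_atTop 0, self_mem_nhdsWithin] with ε h2 h3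
  have h3 : (0 : ℝ) < ε := h3
  rw [one_div (c * ε), Real.log_inv, Real.log_mul hc.ne' h3.ne']
  field_simp
  rw [one_div, Real.log_inv]
  ring

lemma limsup_scale (L : ℝ → ℕ) (c : ℝ) (hc : 0 < c) :
    limsup (fun ε : ℝ => ((Real.log (L (c * ε)) / Real.log (1 / ε) : ℝ) : EReal))
      (nhdsWithin 0 (Set.Ioi 0)) ≤
    limsup (fun ε : ℝ => ((Real.log (L ε) / Real.log (1 / ε) : ℝ) : EReal))
      (nhdsWithin 0 (Set.Ioi 0)) := by
  refine EReal.le_of_forall_lt_iff_le.1 ?_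
  intro b hb
  obtain ⟨b', hb1, hb2⟩ := EReal.lt_iff_exists_real_btwn.1 hb
  have hb2 : b' < b := by exact_mod_cast hb2
  have hev := eventually_lt_of_limsup_lt hb1
  have hlog : Tendsto (fun ε : ℝ => Real.log (1 / ε)) (nhdsWithin 0 (Set.Ioi 0)) atTop := by
    simp only [one_div]
    exact Real.tendsto_log_atTop.comp tendsto_inv_nhdsGT_zero
  have hmap : Tendsto (fun ε : ℝ => c * ε) (nhdsWithin 0 (Set.Ioi 0))
      (nhdsWithin 0 (Set.Ioi 0)) := by
    refine tendsto_nhdsWithin_iff.2 ⟨?_, ?_⟩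
    · have : Tendsto (fun ε : ℝ => c * ε) (nhds 0) (nhds (c * 0)) :=
        (continuous_const.mul continuous_id).tendsto 0
      rw [mul_zero] at this
      exact this.mono_left nhdsWithin_le_nhds
    · filter_upwards [self_mem_nhdsWithin] with ε hε
      exact mul_pos hc hε
  have hr : Tendsto (fun ε : ℝ => b' * (Real.log (1 / (c * ε)) / Real.log (1 / ε)))
      (nhdsWithin 0 (Set.Ioi 0)) (nhds (b' * 1)) := (log_ratio_tendsto c hc).const_mul b'
  rw [mul_one] at hr
  refine limsup_le_of_le (by isBoundedDefault) ?_
  filter_upwards [hmap.eventually hev, hr.eventually_lt_const hb2,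
    hlog.eventually_gt_atTop 0, hmap.eventually (hlog.eventually_gt_atTop 0)] with ε h1 h2 h3 h4
  have h1 : Real.log (L (c * ε)) / Real.log (1 / (c * ε)) < b' := by exact_mod_cast h1
  have : Real.log (L (c * ε)) / Real.log (1 / ε) ≤ b := by
    rw [div_lt_iff₀ h4] at h1
    rw [← mul_div_assoc] at h2
    exact (div_le_div_of_nonneg_right h1.le h3.le).trans h2.le
  exact_mod_cast this

lemma ev_nonneg (f : ℝ → ℕ) :
    ∀ᶠ ε in nhdsWithin (0 : ℝ) (Set.Ioi 0), 0 ≤ Real.log (f ε) / Real.log (1 / ε) := by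
  have hlog : Tendsto (fun ε : ℝ => Real.log (1 / ε)) (nhdsWithin 0 (Set.Ioi 0)) atTop := by
    simp only [one_div]
    exact Real.tendsto_log_atTop.comp tendsto_inv_nhdsGT_zero
  filter_upwards [hlog.eventually_gt_atTop 0] with ε h
  exact div_nonneg (Real.log_natCast_nonneg _) h.le

lemma limsup_nonneg' {F : Filter ℝ} [F.NeBot] (f : ℝ → EReal) (hf : ∀ᶠ x in F, 0 ≤ f x) :
    0 ≤ limsup f F :=
  le_limsup_of_frequently_le hf.frequently (by isBoundedDefault)

lemma limsup_add_le' {F : Filter ℝ} [F.NeBot] (f g : ℝ → EReal) (hf : ∀ᶠ x in F, 0 ≤ f x)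
    (hg : ∀ᶠ x in F, 0 ≤ g x) :
    limsup (fun x => f x + g x) F ≤ limsup f F + limsup g F := by
  have h1 := limsup_nonneg' f hf
  have h2 := limsup_nonneg' g hg
  refine EReal.limsup_add_le (Or.inl ?_) (Or.inr ?_)
  · exact (lt_of_lt_of_le EReal.bot_lt_zero h1).ne'
  · exact (lt_of_lt_of_le EReal.bot_lt_zero h2).ne'

lemma limsup_sum_le' {F : Filter ℝ} [F.NeBot] (s : Finset ℕ) (f : ℕ → ℝ → EReal)
    (hf : ∀ i, ∀ᶠ x in F, 0 ≤ f i x) :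
    limsup (fun x => ∑ i ∈ s, f i x) F ≤ ∑ i ∈ s, limsup (f i) F := by
  classical
  induction s using Finset.induction_on with
  | empty => simp
  | insert a s ha ih =>
    simp only [Finset.sum_insert ha]
    refine (limsup_add_le' _ _ (hf a) ?_).trans (add_le_add_right ih _)
    have : ∀ᶠ x in F, ∀ i ∈ s, 0 ≤ f i x := (Finset.eventually_all s).2 fun i _ => hf i
    filter_upwards [this] with x hx
    exact Finset.sum_nonneg hx

/-- the surrogate dimension is bounded by the `l1`-dimension. -/
theorem surrogate_dim_le_l1_dim
    [Fintype S] [Fintype A] [Nonempty S] [Nonempty A]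
    (H : ℕ) (hH : 1 ≤ H) (s₁ : S)
    (Θ : Set (Env S A))
    (hΘ : ∀ E ∈ Θ, IsKernel H E.1 ∧ IsReward H E.2)
    (πstar : Env S A → (ℕ → S → A → ℝ))
    (hπstar : ∀ E ∈ Θ, IsPolicy H (πstar E))
    (hopt : ∀ E ∈ Θ, ∀ pol, IsPolicy H pol →
      val H E.1 E.2 pol H s₁ ≤ val H E.1 E.2 (πstar E) H s₁)
    (LP LR : ℕ → ℝ → ℕ)
    -- `LP h δ` is the minimal cardinality of a `δ`-cover of `{P_h^E : E ∈ Θ}`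
    (hLP : ∀ h ∈ Finset.Icc 1 H, ∀ δ : ℝ, 0 < δ →
      (∃ C : Finset (S → A → S → ℝ), C.card = LP h δ ∧
        ∀ E ∈ Θ, ∃ Q ∈ C,
          (Finset.univ.sup' Finset.univ_nonempty fun p : S × A =>
            ∑ s', |E.1 h p.1 p.2 s' - Q p.1 p.2 s'|) ≤ δ) ∧
      (∀ C : Finset (S → A → S → ℝ),
        (∀ E ∈ Θ, ∃ Q ∈ C,
          (Finset.univ.sup' Finset.univ_nonempty fun p : S × A =>
            ∑ s', |E.1 h p.1 p.2 s' - Q p.1 p.2 s'|) ≤ δ) → LP h δ ≤ C.card))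
    -- `LR h δ` is the minimal cardinality of a `δ`-cover of `{r_h^E : E ∈ Θ}`
    (hLR : ∀ h ∈ Finset.Icc 1 H, ∀ δ : ℝ, 0 < δ →
      (∃ C : Finset (S → A → ℝ), C.card = LR h δ ∧
        ∀ E ∈ Θ, ∃ q ∈ C,
          (Finset.univ.sup' Finset.univ_nonempty fun p : S × A =>
            |E.2 h p.1 p.2 - q p.1 p.2|) ≤ δ) ∧
      (∀ C : Finset (S → A → ℝ),
        (∀ E ∈ Θ, ∃ q ∈ C,
          (Finset.univ.sup' Finset.univ_nonempty fun p : S × A =>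
            |E.2 h p.1 p.2 - q p.1 p.2|) ≤ δ) → LR h δ ≤ C.card))
    (Ksurr : ℝ → ℕ)
    -- `Ksurr ε` is the minimal number of classes of a layered ε-value partition of `Θ`
    (hKsurr : ∀ ε : ℝ, 0 < ε →
      (∃ T : Fin (Ksurr ε) → Set (Env S A),
        IsLayeredValuePartition H s₁ Θ πstar ε (Ksurr ε) T) ∧
      (∀ (K : ℕ) (T : Fin K → Set (Env S A)),
        IsLayeredValuePartition H s₁ Θ πstar ε K T → Ksurr ε ≤ K)) :
    limsup (fun ε : ℝ =>
        ((Real.log (Ksurr ε) / Real.log (1 / ε) : ℝ) : EReal)) (nhdsWithin 0 (Set.Ioi 0)) ≤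
      ∑ h ∈ Finset.Icc 1 H,
        (limsup (fun δ : ℝ =>
            ((Real.log (LP h δ) / Real.log (1 / δ) : ℝ) : EReal)) (nhdsWithin 0 (Set.Ioi 0)) +
          limsup (fun δ : ℝ =>
            ((Real.log (LR h δ) / Real.log (1 / δ) : ℝ) : EReal)) (nhdsWithin 0 (Set.Ioi 0))) := by
  classical
  have hH' : (1 : ℝ) ≤ H := by exact_mod_cast hH
  obtain ⟨c, hc, hcH⟩ : ∃ c : ℝ, 0 < c ∧ (H : ℝ) * ((1 + H) * (2 * c)) = 1 := by
    refine ⟨1 / (H * (1 + H) * 2), by positivity, ?_⟩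
    field_simp
  have hK : ∀ ε : ℝ, 0 < ε → Ksurr ε ≤ ∏ h ∈ Finset.Icc 1 H, (LP h (c * ε) * LR h (c * ε)) := by
    intro ε hε
    have hδ : 0 < c * ε := mul_pos hc hε
    have e1 : ∀ h, ∃ C : Finset (S → A → S → ℝ), h ∈ Finset.Icc 1 H → C.card = LP h (c * ε) ∧
        ∀ E ∈ Θ, ∃ Q ∈ C, ∀ s a, ∑ s', |E.1 h s a s' - Q s a s'| ≤ c * ε := by
      intro h
      by_cases hh : h ∈ Finset.Icc 1 H
      · obtain ⟨C, h1, h2⟩ := (hLP h hh _ hδ).1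
        refine ⟨C, fun _ => ⟨h1, fun E hE => ?_⟩⟩
        obtain ⟨Q, hQ, h3⟩ := h2 E hE
        exact ⟨Q, hQ, fun s a => (Finset.sup'_le_iff _ _).1 h3 (s, a) (Finset.mem_univ _)⟩
      · exact ⟨∅, fun h => absurd h hh⟩
    have e2 : ∀ h, ∃ C : Finset (S → A → ℝ), h ∈ Finset.Icc 1 H → C.card = LR h (c * ε) ∧
        ∀ E ∈ Θ, ∃ Q ∈ C, ∀ s a, |E.2 h s a - Q s a| ≤ c * ε := by
      intro h
      by_cases hh : h ∈ Finset.Icc 1 H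
      · obtain ⟨C, h1, h2⟩ := (hLR h hh _ hδ).1
        refine ⟨C, fun _ => ⟨h1, fun E hE => ?_⟩⟩
        obtain ⟨Q, hQ, h3⟩ := h2 E hE
        exact ⟨Q, hQ, fun s a => (Finset.sup'_le_iff _ _).1 h3 (s, a) (Finset.mem_univ _)⟩
      · exact ⟨∅, fun h => absurd h hh⟩
    choose C hC using e1
    choose D hD using e2
    obtain ⟨T, hT⟩ := exists_partition H s₁ Θ hΘ πstar hπstar ε (c * ε) hδ.le
      (le_of_eq (by linear_combination ε * hcH)) C D
      (fun h hh => (hC h hh).2) (fun h hh => (hD h hh).2)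
    refine ((hKsurr ε hε).2 _ T hT).trans (le_of_eq ?_)
    exact Finset.prod_congr rfl fun h hh => by rw [(hC h hh).1, (hD h hh).1]
  have hlogK : ∀ ε : ℝ, 0 < ε → Real.log (Ksurr ε) ≤
      ∑ h ∈ Finset.Icc 1 H, (Real.log (LP h (c * ε)) + Real.log (LR h (c * ε))) := by
    intro ε hε
    rcases Nat.eq_zero_or_pos (Ksurr ε) with h0 | h0
    · rw [h0]
      simp only [Nat.cast_zero, Real.log_zero]
      exact Finset.sum_nonneg fun h _ =>
        add_nonneg (Real.log_natCast_nonneg _) (Real.log_natCast_nonneg _)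
    · have hpos : ∏ h ∈ Finset.Icc 1 H, (LP h (c * ε) * LR h (c * ε)) ≠ 0 :=
        (lt_of_lt_of_le h0 (hK ε hε)).ne'
      rw [Finset.prod_ne_zero_iff] at hpos
      have h1 : Real.log (Ksurr ε) ≤
          Real.log ((∏ h ∈ Finset.Icc 1 H, (LP h (c * ε) * LR h (c * ε)) : ℕ) : ℝ) :=
        Real.log_le_log (by exact_mod_cast h0) (by exact_mod_cast hK ε hε)
      refine h1.trans (le_of_eq ?_)
      push_cast
      rw [Real.log_prod (fun h hh => by exact_mod_cast hpos h hh)]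
      refine Finset.sum_congr rfl fun h hh => ?_
      have := mul_ne_zero_iff.1 (hpos h hh)
      exact Real.log_mul (by exact_mod_cast this.1) (by exact_mod_cast this.2)
  have hlog : Tendsto (fun ε : ℝ => Real.log (1 / ε)) (nhdsWithin 0 (Set.Ioi 0)) atTop := by
    simp only [one_div]
    exact Real.tendsto_log_atTop.comp tendsto_inv_nhdsGT_zero
  have nn : ∀ L : ℝ → ℕ, ∀ᶠ ε in nhdsWithin (0 : ℝ) (Set.Ioi 0),
      (0 : EReal) ≤ ((Real.log (L (c * ε)) / Real.log (1 / ε) : ℝ) : EReal) := by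
    intro L
    filter_upwards [ev_nonneg fun ε => L (c * ε)] with ε h
    exact_mod_cast h
  calc _ ≤ limsup (fun ε : ℝ => ∑ h ∈ Finset.Icc 1 H,
        (((Real.log (LP h (c * ε)) / Real.log (1 / ε) : ℝ) : EReal) +
          ((Real.log (LR h (c * ε)) / Real.log (1 / ε) : ℝ) : EReal)))
          (nhdsWithin 0 (Set.Ioi 0)) := by
        refine limsup_le_limsup ?_ (by isBoundedDefault) (by isBoundedDefault)
        filter_upwards [hlog.eventually_gt_atTop 0, self_mem_nhdsWithin] with ε h1 h2
        have h3 := div_le_div_of_nonneg_right (hlogK ε h2) h1.le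
        rw [Finset.sum_div] at h3
        simp only [add_div] at h3
        have h4 := EReal.coe_le_coe_iff.2 h3
        refine h4.trans (le_of_eq ?_)
        have hs : ∀ (s : Finset ℕ) (f : ℕ → ℝ), ((∑ i ∈ s, f i : ℝ) : EReal) =
            ∑ i ∈ s, (f i : EReal) := by
          intro s f
          induction s using Finset.induction_on with
          | empty => simp
          | insert a s ha ih => simp only [Finset.sum_insert ha, EReal.coe_add, ih]
        rw [hs]
        simp only [EReal.coe_add]
    _ ≤ _ := by
        refine (limsup_sum_le' _ _ fun h => ?_).trans (Finset.sum_le_sum fun h _ => ?_)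
        · filter_upwards [nn (LP h), nn (LR h)] with ε h1 h2
          exact add_nonneg h1 h2
        · exact (limsup_add_le' _ _ (nn (LP h)) (nn (LR h))).trans
            (add_le_add (limsup_scale (LP h) c hc) (limsup_scale (LR h) c hc))
end

section
/- Let Θ be the set of ALL time-inhomogeneous tabular environments on a state space S with |S| = S̄ states, action space A with |A| = Ā actions and horizon H (i.e., all tuples of transition kernels P_h : S × A → Δ(S) and mean rewards r_h : S × A → [0,1]), with fixed initial state s₁ and a choice E ↦ π*_E of optimal policies. Then for every ε ∈ (0,1], Θ admits a layered ε-value partition with at most (16 S̄ H² / ε)^{S̄² Ā H} · (4H/ε)^{S̄ Ā H} classes. -/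
open Finset

variable {S A : Type*}

lemma lvp_val_bounds [Fintype S] [Fintype A] (H : ℕ) (P : ℕ → S → A → S → ℝ)
    (r : ℕ → S → A → ℝ) (pol : ℕ → S → A → ℝ) (hP : IsKernel H P) (hr : IsReward H r)
    (hpol : IsPolicy H pol) (k : ℕ) (hk : k ≤ H) (s : S) :
    0 ≤ val H P r pol k s ∧ val H P r pol k s ≤ k := by
  induction k generalizing s with
  | zero => simp [_root_.val]
  | succ k ih =>
    have ih := ih (by omega)
    have hh : H - k ∈ Finset.Icc 1 H := by simp; omega
    have hQ : ∀ a, 0 ≤ r (H - k) s a + ∑ s', P (H - k) s a s' * val H P r pol k s' ∧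
        r (H - k) s a + ∑ s', P (H - k) s a s' * val H P r pol k s' ≤ (k : ℝ) + 1 := by
      intro a
      obtain ⟨h1, h2⟩ := hr _ hh s a
      obtain ⟨h3, h4⟩ := hP _ hh s a
      have h5 : 0 ≤ ∑ s', P (H - k) s a s' * val H P r pol k s' :=
        Finset.sum_nonneg fun s' _ => mul_nonneg (h3 s') (ih s').1
      have h6 : ∑ s', P (H - k) s a s' * val H P r pol k s' ≤ ∑ s', P (H - k) s a s' * (k : ℝ) :=
        Finset.sum_le_sum fun s' _ => mul_le_mul_of_nonneg_left (ih s').2 (h3 s')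
      rw [← Finset.sum_mul, h4] at h6
      constructor <;> linarith
    obtain ⟨p1, p2⟩ := hpol _ hh s
    simp only [_root_.val]
    refine ⟨Finset.sum_nonneg fun a _ => mul_nonneg (p1 a) (hQ a).1, ?_⟩
    have h7 := Finset.sum_le_sum fun a (_ : a ∈ Finset.univ) =>
      mul_le_mul_of_nonneg_left (hQ a).2 (p1 a)
    rw [← Finset.sum_mul, p2] at h7
    push_cast
    linarith

lemma lvp_val_diff [Fintype S] [Fintype A] (H : ℕ) (P P' : ℕ → S → A → S → ℝ)
    (r r' : ℕ → S → A → ℝ) (pol : ℕ → S → A → ℝ) (hP : IsKernel H P) (hP' : IsKernel H P')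
    (hr' : IsReward H r') (hpol : IsPolicy H pol) (δ η : ℝ)
    (hδ : ∀ h ∈ Finset.Icc 1 H, ∀ s a, |r h s a - r' h s a| ≤ δ)
    (hη : ∀ h ∈ Finset.Icc 1 H, ∀ s a s', |P h s a s' - P' h s a s'| ≤ η)
    (k : ℕ) (hk : k ≤ H) (s : S) :
    val H P r pol k s - val H P' r' pol k s ≤ k * (δ + Fintype.card S * (η * H)) := by
  induction k generalizing s with
  | zero => simp [_root_.val]
  | succ k ih =>
    have ih := ih (by omega)
    have hh : H - k ∈ Finset.Icc 1 H := by simp; omega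
    obtain ⟨p1, p2⟩ := hpol _ hh s
    have hQ : ∀ a, (r (H - k) s a + ∑ s', P (H - k) s a s' * val H P r pol k s') -
        (r' (H - k) s a + ∑ s', P' (H - k) s a s' * val H P' r' pol k s') ≤
        ((k : ℝ) + 1) * (δ + Fintype.card S * (η * H)) := by
      intro a
      obtain ⟨h3, h4⟩ := hP _ hh s a
      have h1 := (abs_le.1 (hδ _ hh s a)).2
      have h5 : ∑ s', P (H - k) s a s' * (val H P r pol k s' - val H P' r' pol k s') ≤
          ∑ s', P (H - k) s a s' * (k * (δ + Fintype.card S * (η * H))) :=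
        Finset.sum_le_sum fun s' _ => mul_le_mul_of_nonneg_left (ih s') (h3 s')
      rw [← Finset.sum_mul, h4] at h5
      have h6 : ∑ s', (P (H - k) s a s' - P' (H - k) s a s') * val H P' r' pol k s' ≤
          ∑ _s' : S, η * (H : ℝ) := by
        refine Finset.sum_le_sum fun s' _ => ?_
        obtain ⟨b1, b2⟩ := lvp_val_bounds H P' r' pol hP' hr' hpol k (by omega) s'
        have hkH : (k : ℝ) ≤ H := by exact_mod_cast (by omega : k ≤ H)
        have e := hη _ hh s a s'
        have e0 := (abs_nonneg _).trans e
        exact mul_le_mul ((le_abs_self _).trans e) (b2.trans hkH) b1 e0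
      rw [Finset.sum_const, Finset.card_univ, nsmul_eq_mul] at h6
      have h7 : ∑ s', P (H - k) s a s' * val H P r pol k s' -
          ∑ s', P' (H - k) s a s' * val H P' r' pol k s' =
          ∑ s', P (H - k) s a s' * (val H P r pol k s' - val H P' r' pol k s') +
          ∑ s', (P (H - k) s a s' - P' (H - k) s a s') * val H P' r' pol k s' := by
        rw [← Finset.sum_sub_distrib, ← Finset.sum_add_distrib]
        exact Finset.sum_congr rfl fun _ _ => by ring
      linarith
    simp only [_root_.val]
    rw [← Finset.sum_sub_distrib]
    have h8 := Finset.sum_le_sum fun a (_ : a ∈ Finset.univ) =>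
      mul_le_mul_of_nonneg_left (hQ a) (p1 a)
    rw [← Finset.sum_mul, p2] at h8
    simp only [mul_sub] at h8
    push_cast
    linarith

lemma lvp_floor_close (n : ℕ) (hn : 0 < n) (x y : ℝ) (hx : 0 ≤ x) (hy : 0 ≤ y)
    (h : ⌊x * n⌋₊ = ⌊y * n⌋₊) : |x - y| ≤ 1 / n := by
  have hn' : (0 : ℝ) < n := by exact_mod_cast hn
  have a1 := Nat.floor_le (mul_nonneg hx hn'.le)
  have a2 := Nat.lt_floor_add_one (x * n)
  have b1 := Nat.floor_le (mul_nonneg hy hn'.le)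
  have b2 := Nat.lt_floor_add_one (y * n)
  rw [h] at a1 a2
  rw [le_div_iff₀ hn', ← abs_of_pos hn', ← abs_mul, sub_mul, abs_le]
  constructor <;> linarith

lemma lvp_floor_lt (n : ℕ) (x : ℝ) (hx1 : x ≤ 1) : ⌊x * n⌋₊ < n + 1 := by
  have : ⌊x * n⌋₊ ≤ ⌊(n : ℝ)⌋₊ := Nat.floor_le_floor (by
    have : (0 : ℝ) ≤ n := n.cast_nonneg
    nlinarith)
  rw [Nat.floor_natCast] at this
  omega

/-- the set of ALL tabular environments admits a layered ε-value
partition with at most `(16·S̄·H²/ε)^(S̄²·Ā·H) · (4H/ε)^(S̄·Ā·H)` classes. -/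
theorem layered_value_partition_all_tabular
    [Fintype S] [Fintype A] [Nonempty S] [Nonempty A]
    (H : ℕ) (hH : 1 ≤ H) (s₁ : S)
    (πstar : Env S A → (ℕ → S → A → ℝ))
    (hπstar : ∀ E : Env S A, IsKernel H E.1 → IsReward H E.2 → IsPolicy H (πstar E))
    (hopt : ∀ E : Env S A, IsKernel H E.1 → IsReward H E.2 → ∀ pol, IsPolicy H pol →
      val H E.1 E.2 pol H s₁ ≤ val H E.1 E.2 (πstar E) H s₁)
    (ε : ℝ) (hε0 : 0 < ε) (hε1 : ε ≤ 1) :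
    ∃ (K : ℕ) (T : Fin K → Set (Env S A)),
      IsLayeredValuePartition H s₁ {E : Env S A | IsKernel H E.1 ∧ IsReward H E.2}
        πstar ε K T ∧
      (K : ℝ) ≤
        (16 * (Fintype.card S : ℝ) * (H : ℝ) ^ 2 / ε) ^
            (Fintype.card S ^ 2 * Fintype.card A * H) *
          (4 * (H : ℝ) / ε) ^ (Fintype.card S * Fintype.card A * H) := by
  classical
  have hHr : (1 : ℝ) ≤ H := by exact_mod_cast hH
  have hSr : (1 : ℝ) ≤ Fintype.card S := by exact_mod_cast Fintype.card_pos (α := S)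
  set c : ℝ := (Fintype.card S : ℝ) with hc
  have hx1 : 1 ≤ (H : ℝ) / ε := by rw [le_div_iff₀ hε0]; linarith
  have hy1 : 1 ≤ c * (H : ℝ) ^ 2 / ε := by
    rw [le_div_iff₀ hε0]
    nlinarith [one_le_pow₀ hHr (n := 2)]
  obtain ⟨n, hn0, hn1, hn2⟩ : ∃ n : ℕ, 0 < n ∧ 2 * ((H : ℝ) / ε) ≤ n ∧
      (n : ℝ) + 1 ≤ 4 * (H / ε) := by
    refine ⟨⌈2 * ((H : ℝ) / ε)⌉₊, Nat.ceil_pos.2 (by linarith), Nat.le_ceil _, ?_⟩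
    have := Nat.ceil_lt_add_one (a := 2 * ((H : ℝ) / ε)) (by linarith)
    linarith
  obtain ⟨m, hm0, hm1, hm2⟩ : ∃ m : ℕ, 0 < m ∧ 2 * (c * (H : ℝ) ^ 2 / ε) ≤ m ∧
      (m : ℝ) + 1 ≤ 16 * (c * (H : ℝ) ^ 2 / ε) := by
    refine ⟨⌈2 * (c * (H : ℝ) ^ 2 / ε)⌉₊, Nat.ceil_pos.2 (by linarith), Nat.le_ceil _, ?_⟩
    have := Nat.ceil_lt_add_one (a := 2 * (c * (H : ℝ) ^ 2 / ε)) (by linarith)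
    linarith
  let I := (Fin H × S × A × S → Fin (m + 1)) × (Fin H × S × A → Fin (n + 1))
  let e : I ≃ Fin (Fintype.card I) := Fintype.equivFin I
  let As : I → ℕ → Set (S → A → S → ℝ) := fun i h =>
    {p | ∀ j : Fin H, (j : ℕ) + 1 = h → ∀ s a s', ⌊p s a s' * m⌋₊ = i.1 (j, s, a, s')}
  let Bs : I → ℕ → Set (S → A → ℝ) := fun i h =>
    {p | ∀ j : Fin H, (j : ℕ) + 1 = h → ∀ s a, ⌊p s a * n⌋₊ = i.2 (j, s, a)}
  have hmem : ∀ j : Fin H, (j : ℕ) + 1 ∈ Finset.Icc 1 H := fun j => by simp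
  refine ⟨Fintype.card I, fun k => {E ∈ {E : Env S A | IsKernel H E.1 ∧ IsReward H E.2} |
    ∀ h ∈ Finset.Icc 1 H, E.1 h ∈ As (e.symm k) h ∧ E.2 h ∈ Bs (e.symm k) h}, ⟨?_, ?_, ?_⟩, ?_⟩
  · rintro E ⟨hP, hr⟩
    have hP1 : ∀ h ∈ Finset.Icc 1 H, ∀ s a s', E.1 h s a s' ≤ 1 := by
      intro h hh s a s'
      obtain ⟨q1, q2⟩ := hP h hh s a
      rw [← q2]
      exact Finset.single_le_sum (fun x _ => q1 x) (Finset.mem_univ s')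
    let i : I := (fun x => ⟨⌊E.1 (x.1 + 1) x.2.1 x.2.2.1 x.2.2.2 * m⌋₊,
        lvp_floor_lt m _ (hP1 _ (hmem x.1) _ _ _)⟩,
      fun x => ⟨⌊E.2 (x.1 + 1) x.2.1 x.2.2 * n⌋₊, lvp_floor_lt n _ (hr _ (hmem x.1) _ _).2⟩)
    refine ⟨e i, ⟨⟨hP, hr⟩, ?_⟩, ?_⟩
    · intro h hh
      rw [Equiv.symm_apply_apply]
      constructor
      · rintro j rfl s a s'
        rfl
      · rintro j rfl s a
        rfl
    · rintro k ⟨-, hk⟩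
      rw [← Equiv.symm_apply_eq]
      refine Prod.ext ?_ ?_
      · funext ⟨j, s, a, s'⟩
        exact Fin.ext ((hk _ (hmem j)).1 j rfl s a s').symm
      · funext ⟨j, s, a⟩
        exact Fin.ext ((hk _ (hmem j)).2 j rfl s a).symm
  · intro k
    exact ⟨As (e.symm k), Bs (e.symm k), rfl⟩
  · rintro k E ⟨⟨hP, hr⟩, hE⟩ E' ⟨⟨hP', hr'⟩, hE'⟩
    have key := lvp_val_diff H E.1 E'.1 E.2 E'.2 (πstar E) hP hP' hr' (hπstar E hP hr)
      (1 / n) (1 / m) ?_ ?_ H le_rfl s₁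
    · refine key.trans ?_
      have hn' : (0 : ℝ) < n := by exact_mod_cast hn0
      have hm' : (0 : ℝ) < m := by exact_mod_cast hm0
      have k1 : (H : ℝ) / n ≤ ε / 2 := by
        rw [div_le_iff₀ hn']
        have := mul_le_mul_of_nonneg_left hn1 hε0.le
        have e1 : ε * (2 * ((H : ℝ) / ε)) = 2 * H := by field_simp
        linarith
      have k2 : c * (H : ℝ) ^ 2 / m ≤ ε / 2 := by
        rw [div_le_iff₀ hm']
        have := mul_le_mul_of_nonneg_left hm1 hε0.le
        have e1 : ε * (2 * (c * (H : ℝ) ^ 2 / ε)) = 2 * (c * (H : ℝ) ^ 2) := by field_simp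
        linarith
      calc (H : ℝ) * (1 / n + c * (1 / m * H)) = H / n + c * (H : ℝ) ^ 2 / m := by ring
        _ ≤ ε := by linarith
    · intro h hh s a
      have hh' := Finset.mem_Icc.1 hh
      have hj : ((⟨h - 1, by omega⟩ : Fin H) : ℕ) + 1 = h := by simp; omega
      exact lvp_floor_close n hn0 _ _ (hr h hh s a).1 (hr' h hh s a).1
        (((hE h hh).2 _ hj s a).trans ((hE' h hh).2 _ hj s a).symm)
    · intro h hh s a s'
      have hh' := Finset.mem_Icc.1 hh
      have hj : ((⟨h - 1, by omega⟩ : Fin H) : ℕ) + 1 = h := by simp; omega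
      exact lvp_floor_close m hm0 _ _ ((hP h hh s a).1 s') ((hP' h hh s a).1 s')
        (((hE h hh).1 _ hj s a s').trans ((hE' h hh).1 _ hj s a s').symm)
  · have hcard : (Fintype.card I : ℝ) =
        ((m : ℝ) + 1) ^ (Fintype.card S ^ 2 * Fintype.card A * H) *
          ((n : ℝ) + 1) ^ (Fintype.card S * Fintype.card A * H) := by
      simp only [I, Fintype.card_prod, Fintype.card_fun, Fintype.card_fin]
      push_cast
      congr 2 <;> ring
    rw [hcard]
    have g1 : (m : ℝ) + 1 ≤ 16 * c * (H : ℝ) ^ 2 / ε := hm2.trans_eq (by ring)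
    have g2 : (n : ℝ) + 1 ≤ 4 * (H : ℝ) / ε := hn2.trans_eq (by ring)
    gcongr
end
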